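/- arXiv:1903.12353 — 2 statements merged into one kernel-verified Lean document; each statement's English description precedes it below -/
import Mathlib

section
/- Let b be a prime and let P be a digital net over F_b with generating matrices C_1,...,C_s in F_b^{n x m}, with dual net P^perp. Then for every real lambda > 1, the series sum_{z=1}^infty b^{(1-lambda) z} z^{s-1} converges and sum_{k in P^perp \ {0}} b^{-lambda mu_1(k)} <= 2^{s-1} b^{lambda} (mu_1(P^perp))^{s-1} b^{-lambda mu_1(P^perp)} sum_{z=1}^infty b^{(1-lambda) z} z^{s-1}. -/
open MeasureTheory Finset Matrix

noncomputable section

/-- The `i`-th `b`-adic digit of a natural number `k`. -/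
def ndigit (b k i : ℕ) : ℕ := k / b ^ i % b

/-- The truncated digit vector `ν_n(k) ∈ F_b^n`. -/
def digitVec (b n : ℕ) (k : ℕ) : Fin n → ZMod b := fun i => (ndigit b k i.val : ZMod b)

/-- The dual net of the digital net with generating matrices `C_1,...,C_s ∈ F_b^{n×m}`. -/
def dualNet {s n m : ℕ} (b : ℕ) (C : Fin s → Matrix (Fin n) (Fin m) (ZMod b)) :
    Set (Fin s → ℕ) :=
  {k | ∑ j, (C j)ᵀ.mulVec (digitVec b n (k j)) = 0}

/-- The list of positions (in decreasing order) of the nonzero `b`-adic digits of `k`;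
position `i` corresponds to the digit of `b^i`, i.e. to the exponent `c - 1` in the paper. -/
def nzPos (b k : ℕ) : List ℕ :=
  (((Finset.range k).filter fun i => ndigit b k i ≠ 0).sort (· ≤ ·)).reverse

/-- The Dick weight function `μ_α` (for `α = 1` the NRT weight). -/
def dickWeight (b α k : ℕ) : ℕ := (((nzPos b k).take α).map (· + 1)).sum

/-- The Dick weight of a vector of nonnegative integers. -/
def dickWeightV (b α : ℕ) {s : ℕ} (k : Fin s → ℕ) : ℕ := ∑ j, dickWeight b α (k j)

/-- `μ_α(P^⊥)`, the minimal Dick weight over nonzero elements of the dual net. -/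
def minWeight {s n m : ℕ} (b α : ℕ) (C : Fin s → Matrix (Fin n) (Fin m) (ZMod b)) : ℕ :=
  sInf (dickWeightV b α '' {k | k ∈ dualNet b C ∧ k ≠ 0})

/-- The list `κ_1 b^{c_1-1}, κ_2 b^{c_2-1}, ...` of nonzero terms of the `b`-adic
expansion of `k`, in decreasing order of the exponents. -/
def nzTerms (b k : ℕ) : List ℕ := (nzPos b k).map fun i => ndigit b k i * b ^ i

/-- `k^{(p)}`: the number `k` with its `p` most significant nonzero digits removed. -/
def trunc (b p k : ℕ) : ℕ := ((nzTerms b k).drop p).sum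

/-- The term `κ_p b^{c_p-1}` (with the convention `κ_0 b^{c_0-1} = 0`). -/
def topTerm (b p k : ℕ) : ℕ := if p = 0 then 0 else (nzTerms b k).getD (p - 1) 0

/-- `(k,l)` is of type `(p,q)`. -/
def IsType (b p q k l : ℕ) : Prop :=
  if k = l then p = 0 ∧ q = 0
  else trunc b p k = trunc b q l ∧ topTerm b p k ≠ topTerm b q l

/-- `(k,l) ∈ T_{≥ α}`: `(k,l)` is of type `(p,q)` for some `p + q ≥ α`. -/
def TGe (b α k l : ℕ) : Prop := ∃ p q : ℕ, α ≤ p + q ∧ IsType b p q k l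

/-- `(k,l) ∈ T_{≥ α}` for vectors: some coordinate pair lies in `T_{≥ α}`. -/
def TGeV (b α : ℕ) {s : ℕ} (k l : Fin s → ℕ) : Prop := ∃ j, TGe b α (k j) (l j)

/-- The `(i+1)`-st `b`-adic digit `ξ_{i+1}` of `x ∈ [0,1]` (for `x ≠ 1` the unique expansion
with infinitely many digits different from `b-1`; for `x = 1` all digits equal `b-1`). -/
def rdigit (b : ℕ) (x : ℝ) (i : ℕ) : ℕ :=
  if x = 1 then b - 1 else (⌊x * (b : ℝ) ^ (i + 1)⌋).toNat % b

/-- The `k`-th `b`-adic Walsh function. -/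
def walsh (b k : ℕ) (x : ℝ) : ℂ :=
  Complex.exp (2 * (Real.pi : ℂ) * Complex.I *
    ((∑ i ∈ Finset.range k, ndigit b k i * rdigit b x i : ℕ) : ℂ) / (b : ℂ))

/-- The multivariate `b`-adic Walsh function. -/
def walshV (b : ℕ) {s : ℕ} (k : Fin s → ℕ) (x : Fin s → ℝ) : ℂ := ∏ j, walsh b (k j) (x j)

/-- The unit cube `[0,1]^s`. -/
def cube (s : ℕ) : Set (Fin s → ℝ) := Set.univ.pi fun _ => Set.Icc 0 1

/-- The `(k,l)`-th Walsh coefficient of a kernel `K : [0,1]^s × [0,1]^s → ℝ`. -/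
def walshCoeff (b : ℕ) {s : ℕ} (K : (Fin s → ℝ) → (Fin s → ℝ) → ℝ) (k l : Fin s → ℕ) : ℂ :=
  ∫ x in cube s, ∫ y in cube s,
    (K x y : ℂ) * (starRingEnd ℂ) (walshV b k x) * walshV b l y

/-- The `b`-adic digital shift `x ⊕ y` of reals `x, y ∈ [0,1]`. -/
def dshift (b : ℕ) (x y : ℝ) : ℝ :=
  ∑' i : ℕ, (((rdigit b x i + rdigit b y i) % b : ℕ) : ℝ) / (b : ℝ) ^ (i + 1)

/-- Componentwise digital shift of vectors in `[0,1]^s`. -/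
def dshiftV (b : ℕ) {s : ℕ} (x y : Fin s → ℝ) : Fin s → ℝ := fun j => dshift b (x j) (y j)

/-- The `h`-th point of the digital net with generating matrices `C_1,...,C_s ∈ F_b^{n×m}`. -/
def netPoint {s n m : ℕ} (b : ℕ) (C : Fin s → Matrix (Fin n) (Fin m) (ZMod b)) (h : ℕ) :
    Fin s → ℝ :=
  fun j => ∑ i : Fin n, (((C j).mulVec (digitVec b m h) i).val : ℝ) / (b : ℝ) ^ (i.val + 1)

open Classical in
/-- The squared `L_2`-discrepancy of the point multiset `pts 0, ..., pts (N-1)` in `[0,1]^s`. -/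
def sqL2 {s : ℕ} (N : ℕ) (pts : ℕ → (Fin s → ℝ)) : ℝ :=
  ∫ y in cube s,
    ((∑ h ∈ Finset.range N, if ∀ j, 0 ≤ pts h j ∧ pts h j < y j then (1 : ℝ) else 0) / N
      - ∏ j, y j) ^ 2

/-- The Bernoulli polynomial `B_r` evaluated at a real `x`. -/
def bpoly (r : ℕ) (x : ℝ) : ℝ := Polynomial.aeval x (Polynomial.bernoulli r)

/-- The one-dimensional reproducing kernel `K_α` of the Sobolev space of smoothness `α`. -/
def sobKer1 (α : ℕ) (x y : ℝ) : ℝ :=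
  ∑ r ∈ Finset.range (α + 1), bpoly r x * bpoly r y / ((r.factorial : ℝ)) ^ 2
    + (-1 : ℝ) ^ (α + 1) * bpoly (2 * α) |x - y| / ((2 * α).factorial : ℝ)

/-- The `s`-fold product kernel `K_{α,s}`. -/
def sobKer (α : ℕ) {s : ℕ} (x y : Fin s → ℝ) : ℝ := ∏ j, sobKer1 α (x j) (y j)

/-- The constant `C_{τ,b}`. -/
def Ctau (b τ : ℕ) : ℝ :=
  if τ ≤ 1 then 1 / (2 * Real.sin (Real.pi / b))
  else (1 + 1 / (b : ℝ) + 1 / ((b : ℝ) * ((b : ℝ) + 1))) ^ (τ - 2)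
      / (2 * Real.sin (Real.pi / b)) ^ τ

end

/-!
Fix the weights `c j` of the coordinates of `k`, with total `d + w`, where `d` is a positive lower
bound for the weights of the nonzero points, and choose `e ≤ c` with total `d - 1`. Two points whose
digits agree at all positions `≥ e j` have a digitwise difference of weight at most `d - 1`, so they
coincide; the digits at the positions `e j ≤ i < c j` leave at most `b ^ (w + 1)` points. There are
at most `(d + w + 1) ^ (s - 1)` choices of `c`, and summing over `w` gives the bound.
-/

section Digits

variable {b k l i c e : ℕ}

theorem ndigit_lt (hb : 0 < b) : ndigit b k i < b := Nat.mod_lt _ hb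

theorem ndigit_eq_zero_of_lt_pow (h : k < b ^ i) : ndigit b k i = 0 := by
  rw [ndigit, Nat.div_eq_of_lt h, Nat.zero_mod]

theorem ndigit_eq_zero_of_le (hb : 1 < b) (h : k ≤ i) : ndigit b k i = 0 :=
  ndigit_eq_zero_of_lt_pow (h.trans_lt (Nat.lt_pow_self hb))

theorem ndigit_div_pow : ndigit b (k / b ^ e) i = ndigit b k (e + i) := by
  rw [ndigit, ndigit, Nat.div_div_eq_div_mul, pow_add]

theorem ndigit_ext (hb : 1 < b) (h : ∀ i, ndigit b k i = ndigit b l i) : k = l := by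
  have hk : k < b ^ (k + l) := (Nat.le_add_right k l).trans_lt (Nat.lt_pow_self hb)
  have hl : l < b ^ (k + l) := (Nat.le_add_left l k).trans_lt (Nat.lt_pow_self hb)
  have hfin : (⟨k, hk⟩ : Fin (b ^ (k + l))) = ⟨l, hl⟩ :=
    finFunctionFinEquiv.symm.injective (funext fun i => Fin.ext (h i))
  exact congrArg Fin.val hfin

theorem ndigit_sum_mul_pow {f : ℕ → ℕ} (hf : ∀ i, f i < b) (N i : ℕ) :
    ndigit b (∑ j ∈ range N, f j * b ^ j) i = if i < N then f i else 0 := by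
  set x : Fin (b ^ N) := finFunctionFinEquiv fun j : Fin N => ⟨f j, hf j⟩ with hx
  have hsum : ∑ j ∈ range N, f j * b ^ j = x := by
    rw [hx, finFunctionFinEquiv_apply, Fin.sum_univ_eq_sum_range fun j => f j * b ^ j]
  rw [hsum]
  split_ifs with hi
  · exact congrArg Fin.val (congrFun (finFunctionFinEquiv.symm_apply_apply _) (⟨i, hi⟩ : Fin N))
  · have hb : 0 < b := (Nat.zero_le _).trans_lt (hf 0)
    exact ndigit_eq_zero_of_lt_pow
      (x.isLt.trans_le (Nat.pow_le_pow_right hb (Nat.le_of_not_lt hi)))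

theorem div_pow_eq_div_pow_iff (hb : 1 < b) :
    k / b ^ e = l / b ^ e ↔ ∀ i, e ≤ i → ndigit b k i = ndigit b l i := by
  refine ⟨fun h i hi => ?_, fun h => ndigit_ext hb fun i => ?_⟩
  · obtain ⟨r, rfl⟩ := Nat.exists_eq_add_of_le hi
    rw [← ndigit_div_pow, h, ndigit_div_pow]
  · rw [ndigit_div_pow, ndigit_div_pow, h _ (Nat.le_add_right e i)]

theorem lt_pow_iff_forall_ndigit_eq_zero (hb : 1 < b) :
    k < b ^ c ↔ ∀ i, c ≤ i → ndigit b k i = 0 := by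
  have hpos : 0 < b ^ c := by positivity
  rw [← Nat.div_eq_zero_iff_lt hpos]
  simpa [ndigit] using div_pow_eq_div_pow_iff (k := k) (l := 0) (e := c) hb

theorem mem_nzPos (hb : 1 < b) : i ∈ nzPos b k ↔ ndigit b k i ≠ 0 := by
  simp only [nzPos, List.mem_reverse, mem_sort, mem_filter, mem_range, and_iff_right_iff_imp]
  intro h
  by_contra! hik
  exact h (ndigit_eq_zero_of_le hb hik)

theorem dickWeight_one_le_iff_forall_mem_nzPos :
    dickWeight b 1 k ≤ c ↔ ∀ i ∈ nzPos b k, i < c := by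
  have hsorted : (nzPos b k).Pairwise (· ≥ ·) := List.pairwise_reverse.2 (pairwise_sort _ _)
  unfold dickWeight
  cases h : nzPos b k with
  | nil => simp
  | cons top rest =>
    rw [h, List.pairwise_cons] at hsorted
    simp only [List.take_succ_cons, List.take_zero, List.map_cons, List.map_nil, List.sum_singleton,
      Nat.succ_le_iff, List.forall_mem_cons]
    exact ⟨fun htop => ⟨htop, fun i hi => (hsorted.1 i hi).trans_lt htop⟩, And.left⟩

theorem dickWeight_one_le_iff (hb : 1 < b) : dickWeight b 1 k ≤ c ↔ k < b ^ c := by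
  rw [dickWeight_one_le_iff_forall_mem_nzPos, lt_pow_iff_forall_ndigit_eq_zero hb]
  refine forall_congr' fun i => ?_
  rw [mem_nzPos hb, ← not_le, not_imp_not]

theorem dickWeightV_one_eq_zero_iff {s : ℕ} {k : Fin s → ℕ} (hb : 1 < b) :
    dickWeightV b 1 k = 0 ↔ k = 0 := by
  simp only [dickWeightV, sum_eq_zero_iff, mem_univ, true_imp_iff, funext_iff, Pi.zero_apply,
    ← Nat.le_zero, dickWeight_one_le_iff hb, pow_zero, Nat.lt_one_iff]

end Digits

section DigitSub

/-- Digitwise subtraction modulo `b` of natural numbers, without borrowing. All digits of `k` and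
`l` sit at positions below `k + l` when `b > 1`. -/
def digitSub (b k l : ℕ) : ℕ :=
  ∑ i ∈ range (k + l), ((ndigit b k i : ZMod b) - ndigit b l i).val * b ^ i

variable {b k l i e : ℕ}

theorem cast_ndigit_digitSub (hb : 1 < b) :
    (ndigit b (digitSub b k l) i : ZMod b) = ndigit b k i - ndigit b l i := by
  have : NeZero b := ⟨by lia⟩
  rw [digitSub, ndigit_sum_mul_pow fun i => ZMod.val_lt _]
  split_ifs with hi
  · exact ZMod.natCast_zmod_val _
  · rw [ndigit_eq_zero_of_le hb (k := k) (by lia), ndigit_eq_zero_of_le hb (k := l) (by lia),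
      sub_self, Nat.cast_zero]

theorem cast_ndigit_inj (hb : 0 < b) :
    (ndigit b k i : ZMod b) = ndigit b l i ↔ ndigit b k i = ndigit b l i := by
  rw [ZMod.natCast_eq_natCast_iff]
  exact ⟨fun h => h.eq_of_lt_of_lt (ndigit_lt hb) (ndigit_lt hb), fun h => h ▸ Nat.ModEq.refl _⟩

theorem ndigit_digitSub_eq_zero_iff (hb : 1 < b) :
    ndigit b (digitSub b k l) i = 0 ↔ ndigit b k i = ndigit b l i := by
  have hb' : 0 < b := by lia
  rw [← cast_ndigit_inj (k := k) hb', ← sub_eq_zero (G := ZMod b), ← cast_ndigit_digitSub hb,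
    ZMod.natCast_eq_zero_iff]
  exact ⟨fun h => h ▸ dvd_zero b, fun h => Nat.eq_zero_of_dvd_of_lt h (ndigit_lt hb')⟩

theorem digitSub_lt_pow_iff (hb : 1 < b) :
    digitSub b k l < b ^ e ↔ k / b ^ e = l / b ^ e := by
  simp only [lt_pow_iff_forall_ndigit_eq_zero hb, ndigit_digitSub_eq_zero_iff hb,
    div_pow_eq_div_pow_iff hb]

theorem digitSub_eq_zero_iff (hb : 1 < b) : digitSub b k l = 0 ↔ k = l := by
  simpa using digitSub_lt_pow_iff (k := k) (l := l) (e := 0) hb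

/-- Closure of a set of integer vectors under coordinatewise digitwise subtraction; for `b > 1` the
nonempty such sets are the subgroups of `ℕ ^ s` under digitwise addition, such as dual nets. -/
def IsDigitSubClosed (b : ℕ) {s : ℕ} (S : Set (Fin s → ℕ)) : Prop :=
  ∀ ⦃k⦄, k ∈ S → ∀ ⦃l⦄, l ∈ S → (fun j => digitSub b (k j) (l j)) ∈ S

theorem isDigitSubClosed_dualNet {s n m : ℕ} (hb : 1 < b)
    (C : Fin s → Matrix (Fin n) (Fin m) (ZMod b)) : IsDigitSubClosed b (dualNet b C) := by
  intro k hk l hl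
  have hsub (j : Fin s) :
      digitVec b n (digitSub b (k j) (l j)) = digitVec b n (k j) - digitVec b n (l j) :=
    funext fun _ => cast_ndigit_digitSub hb
  simp only [dualNet, Set.mem_ofPred_eq] at hk hl ⊢
  simp only [hsub, mulVec_sub, sum_sub_distrib, hk, hl, sub_zero]

end DigitSub

theorem exists_le_sum_eq {ι : Type*} [Fintype ι] (c : ι → ℕ) {d : ℕ} (hd : d ≤ ∑ j, c j) :
    ∃ e ≤ c, ∑ j, e j = d := by
  obtain ⟨e, hec, he⟩ := Finsupp.exists_le_degree_eq (Finsupp.equivFunOnFinite.symm c) d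
    (by simpa [Finsupp.degree_eq_sum] using hd)
  exact ⟨e, hec, by simpa [Finsupp.degree_eq_sum] using he⟩

theorem card_le_pow_of_forall_sum_eq {s z : ℕ} {T : Finset (Fin s → ℕ)}
    (hT : ∀ c ∈ T, ∑ j, c j = z) : #T ≤ (z + 1) ^ (s - 1) := by
  cases s with
  | zero => simpa using card_le_one_of_subsingleton T
  | succ t =>
    suffices #T ≤ #(Fintype.piFinset fun _ : Fin t => range (z + 1)) by simpa using this
    refine card_le_card_of_injOn Fin.tail (fun c hc => ?_) fun c hc c' hc' htail => ?_
    · simp only [mem_coe, Fintype.mem_piFinset, mem_range, Order.lt_add_one_iff, ← hT c hc]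
      exact fun j => single_le_sum (fun _ _ => Nat.zero_le _) (mem_univ j.succ)
    · have hhead : c 0 + ∑ j, Fin.tail c j = c' 0 + ∑ j, Fin.tail c' j := by
        simpa only [Fin.sum_univ_succ, Fin.tail] using (hT c hc).trans (hT c' hc').symm
      rw [htail, Nat.add_right_cancel_iff] at hhead
      rw [← Fin.cons_self_tail c, ← Fin.cons_self_tail c', hhead, htail]

section Counting

variable {b s d : ℕ} {S : Set (Fin s → ℕ)}

theorem eq_of_forall_div_pow_eq (hb : 1 < b) (hS : IsDigitSubClosed b S)
    (hd : ∀ k ∈ S, k ≠ 0 → d ≤ dickWeightV b 1 k) {e : Fin s → ℕ} (he : ∑ j, e j < d)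
    {k l : Fin s → ℕ} (hk : k ∈ S) (hl : l ∈ S) (h : ∀ j, k j / b ^ e j = l j / b ^ e j) :
    k = l := by
  set q : Fin s → ℕ := fun j => digitSub b (k j) (l j)
  have hweight : dickWeightV b 1 q ≤ ∑ j, e j :=
    sum_le_sum fun j _ => (dickWeight_one_le_iff hb).2 ((digitSub_lt_pow_iff hb).2 (h j))
  have hzero : q = 0 := by
    by_contra hne
    exact (hweight.trans_lt he).not_ge (hd q (hS hk hl) hne)
  exact funext fun j => (digitSub_eq_zero_iff hb).1 (congrFun hzero j)

theorem card_le_pow_of_forall_dickWeight_eq (hb : 1 < b) (hS : IsDigitSubClosed b S) (hd0 : 0 < d)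
    (hd : ∀ k ∈ S, k ≠ 0 → d ≤ dickWeightV b 1 k) {c : Fin s → ℕ} {w : ℕ}
    (hc : ∑ j, c j = d + w) {F : Finset (Fin s → ℕ)} (hFS : ∀ k ∈ F, k ∈ S)
    (hFc : ∀ k ∈ F, ∀ j, dickWeight b 1 (k j) = c j) : #F ≤ b ^ (w + 1) := by
  obtain ⟨e, hec, he⟩ : ∃ e ≤ c, ∑ j, e j = d - 1 := exists_le_sum_eq c (by lia)
  have hexp : ∑ j, (c j - e j) = w + 1 := by
    rw [sum_tsub_distrib _ fun j _ => hec j]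
    lia
  have hbox : #(Fintype.piFinset fun j => range (b ^ (c j - e j))) = b ^ (w + 1) := by
    simp only [Fintype.card_piFinset, card_range, prod_pow_eq_pow_sum, hexp]
  rw [← hbox]
  refine card_le_card_of_injOn (fun k j => k j / b ^ e j) (fun k hk => ?_) fun k hk l hl hkl => ?_
  · simp only [mem_coe, Fintype.mem_piFinset, mem_range]
    intro j
    rw [Nat.div_lt_iff_lt_mul (by positivity), ← pow_add, Nat.sub_add_cancel (hec j),
      ← dickWeight_one_le_iff hb, hFc k hk j]
  · exact eq_of_forall_div_pow_eq hb hS hd (by lia) (hFS k hk) (hFS l hl) (congrFun hkl)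

theorem card_le_of_forall_dickWeightV_eq (hb : 1 < b) (hS : IsDigitSubClosed b S) (hd0 : 0 < d)
    (hd : ∀ k ∈ S, k ≠ 0 → d ≤ dickWeightV b 1 k) {w : ℕ} {F : Finset (Fin s → ℕ)}
    (hFS : ∀ k ∈ F, k ∈ S) (hFw : ∀ k ∈ F, dickWeightV b 1 k = d + w) :
    #F ≤ b ^ (w + 1) * (d + w + 1) ^ (s - 1) := by
  set weights : (Fin s → ℕ) → Fin s → ℕ := fun k j => dickWeight b 1 (k j)
  have hsum : ∀ c ∈ F.image weights, ∑ j, c j = d + w := forall_mem_image.2 hFw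
  have hfiber : ∀ c ∈ F.image weights, #{k ∈ F | weights k = c} ≤ b ^ (w + 1) := fun c hc =>
    card_le_pow_of_forall_dickWeight_eq hb hS hd0 hd (hsum c hc)
      (fun k hk => hFS k (mem_filter.1 hk).1) fun k hk => congrFun (mem_filter.1 hk).2
  calc #F ≤ b ^ (w + 1) * #(F.image weights) := card_le_mul_card_image F _ hfiber
    _ ≤ b ^ (w + 1) * (d + w + 1) ^ (s - 1) := by gcongr; exact card_le_pow_of_forall_sum_eq hsum

end Counting

section Series

theorem summable_comp_and_tsum_comp_le {α : Type*} {v : α → ℕ} {f u : ℕ → ℝ}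
    (hf : ∀ z, 0 ≤ f z) (hu : Summable u)
    (h : ∀ (z : ℕ) (F : Finset α), (∀ k ∈ F, v k = z) → #F * f z ≤ u z) :
    Summable (fun k => f (v k)) ∧ ∑' k, f (v k) ≤ ∑' z, u z := by
  have hu0 (z : ℕ) : 0 ≤ u z := by simpa using h z ∅
  have hbound (F : Finset α) : ∑ k ∈ F, f (v k) ≤ ∑' z, u z := by
    classical
    have hlevel (z : ℕ) : ∑ k ∈ F with v k = z, f (v k) ≤ u z := by
      have hv : ∀ k ∈ ({k ∈ F | v k = z} : Finset α), v k = z := fun k hk => (mem_filter.1 hk).2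
      rw [sum_congr rfl fun k hk => congrArg f (hv k hk), sum_const, nsmul_eq_mul]
      exact h z _ hv
    calc ∑ k ∈ F, f (v k) = ∑ z ∈ F.image v, ∑ k ∈ F with v k = z, f (v k) :=
        (sum_fiberwise_of_maps_to (fun k hk => mem_image_of_mem v hk) _).symm
      _ ≤ ∑ z ∈ F.image v, u z := sum_le_sum fun z _ => hlevel z
      _ ≤ ∑' z, u z := hu.sum_le_tsum _ fun z _ => hu0 z
  exact ⟨summable_of_sum_le (fun k => hf (v k)) hbound,
    Real.tsum_le_of_sum_le (fun k => hf (v k)) hbound⟩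

theorem summable_rpow_mul_pow {x r : ℝ} (hx : 1 < x) (hr : r < 0) (t : ℕ) :
    Summable fun z : ℕ => x ^ (r * ((z : ℝ) + 1)) * ((z : ℝ) + 1) ^ t := by
  have hx0 : 0 < x := by linarith
  have hnorm : ‖x ^ r‖ < 1 := by
    rw [Real.norm_of_nonneg (by positivity)]
    exact Real.rpow_lt_one_of_one_lt_of_neg hx hr
  have hgeom := summable_pow_mul_geometric_of_norm_lt_one t hnorm
  rw [← summable_nat_add_iff 1] at hgeom
  refine hgeom.congr fun z => ?_
  rw [mul_comm, Real.rpow_mul hx0.le, ← Nat.cast_succ, Real.rpow_natCast]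

theorem pow_mul_pow_mul_rpow_le {x : ℝ} (hx : 0 < x) (lam : ℝ) {d : ℕ} (hd : 0 < d) (w t : ℕ) :
    x ^ (w + 1) * ((d : ℝ) + w + 1) ^ t * x ^ (-(lam * ((d : ℝ) + w))) ≤
      2 ^ t * x ^ lam * (d : ℝ) ^ t * x ^ (-(lam * (d : ℝ))) *
        (x ^ ((1 - lam) * ((w : ℝ) + 1)) * ((w : ℝ) + 1) ^ t) := by
  have hd1 : (1 : ℝ) ≤ d := mod_cast hd
  have hbase : (d : ℝ) + w + 1 ≤ 2 * d * (w + 1) := by nlinarith [w.cast_nonneg (α := ℝ)]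
  have hexp : x ^ (w + 1) * x ^ (-(lam * ((d : ℝ) + w))) =
      x ^ lam * x ^ (-(lam * (d : ℝ))) * x ^ ((1 - lam) * ((w : ℝ) + 1)) := by
    rw [← Real.rpow_natCast, ← Real.rpow_add hx, ← Real.rpow_add hx, ← Real.rpow_add hx]
    congr 1
    push_cast
    ring
  calc x ^ (w + 1) * ((d : ℝ) + w + 1) ^ t * x ^ (-(lam * ((d : ℝ) + w)))
      ≤ x ^ (w + 1) * (2 * d * (w + 1)) ^ t * x ^ (-(lam * ((d : ℝ) + w))) := by gcongr
    _ = _ := by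
      rw [mul_pow, mul_pow]
      linear_combination (2 ^ t * (d : ℝ) ^ t * ((w : ℝ) + 1) ^ t) * hexp

theorem summable_and_tsum_rpow_dickWeightV_le {b s d : ℕ} {S : Set (Fin s → ℕ)} (hb : 1 < b)
    (hS : IsDigitSubClosed b S) (hd0 : 0 < d)
    (hd : ∀ k ∈ S, k ≠ 0 → d ≤ dickWeightV b 1 k) {lam : ℝ} (hlam : 1 < lam) :
    Summable (fun k : {k : Fin s → ℕ // k ∈ S ∧ k ≠ 0} =>
      (b : ℝ) ^ (-(lam * (dickWeightV b 1 k.val : ℝ)))) ∧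
    (∑' k : {k : Fin s → ℕ // k ∈ S ∧ k ≠ 0}, (b : ℝ) ^ (-(lam * (dickWeightV b 1 k.val : ℝ))))
      ≤ 2 ^ (s - 1) * (b : ℝ) ^ lam * (d : ℝ) ^ (s - 1) * (b : ℝ) ^ (-(lam * (d : ℝ)))
          * ∑' z : ℕ, (b : ℝ) ^ ((1 - lam) * ((z : ℝ) + 1)) * ((z : ℝ) + 1) ^ (s - 1) := by
  have hb1 : (1 : ℝ) < b := mod_cast hb
  have hweight (k : {k : Fin s → ℕ // k ∈ S ∧ k ≠ 0}) :
      d + (dickWeightV b 1 k.val - d) = dickWeightV b 1 k.val :=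
    Nat.add_sub_cancel' (hd k k.2.1 k.2.2)
  have hlevels := summable_comp_and_tsum_comp_le
    (v := fun k : {k : Fin s → ℕ // k ∈ S ∧ k ≠ 0} => dickWeightV b 1 k.val - d)
    (f := fun w => (b : ℝ) ^ (-(lam * ((d + w : ℕ) : ℝ)))) (fun w => by positivity)
    ((summable_rpow_mul_pow hb1 (sub_neg.2 hlam) (s - 1)).mul_left
      (2 ^ (s - 1) * (b : ℝ) ^ lam * (d : ℝ) ^ (s - 1) * (b : ℝ) ^ (-(lam * (d : ℝ)))))
    fun w F hF => by
      have hcard : #F ≤ b ^ (w + 1) * (d + w + 1) ^ (s - 1) := by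
        rw [← card_map (Function.Embedding.subtype _)]
        exact card_le_of_forall_dickWeightV_eq hb hS hd0 hd
          (forall_mem_map.2 fun k _ => k.2.1)
          (forall_mem_map.2 fun k hk => by rw [← hF k hk]; exact (hweight k).symm)
      have hcardR : (#F : ℝ) ≤ (b : ℝ) ^ (w + 1) * ((d : ℝ) + w + 1) ^ (s - 1) := mod_cast hcard
      refine le_trans ?_ (pow_mul_pow_mul_rpow_le (by linarith) lam hd0 w (s - 1))
      push_cast
      gcongr
  simpa only [hweight, tsum_mul_left] using hlevels

end Series

section MinWeight

variable {b s n m : ℕ} {C : Fin s → Matrix (Fin n) (Fin m) (ZMod b)} {k : Fin s → ℕ}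

theorem minWeight_le {α : ℕ} (hk : k ∈ dualNet b C) (hk0 : k ≠ 0) :
    minWeight b α C ≤ dickWeightV b α k :=
  Nat.sInf_le ⟨k, ⟨hk, hk0⟩, rfl⟩

theorem minWeight_one_pos (hb : 1 < b) (hk : k ∈ dualNet b C) (hk0 : k ≠ 0) :
    0 < minWeight b 1 C := by
  obtain ⟨l, ⟨-, hl0⟩, hl⟩ : minWeight b 1 C ∈ dickWeightV b 1 '' {k | k ∈ dualNet b C ∧ k ≠ 0} :=
    Nat.sInf_mem ⟨_, k, ⟨hk, hk0⟩, rfl⟩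
  rw [← hl, Nat.pos_iff_ne_zero, Ne, dickWeightV_one_eq_zero_iff hb]
  exact hl0

end MinWeight

theorem stmt_1_general (b : ℕ) (hb : 1 < b) (s n m : ℕ)
    (C : Fin s → Matrix (Fin n) (Fin m) (ZMod b)) (lam : ℝ) (hlam : 1 < lam) :
    Summable (fun z : ℕ =>
      (b : ℝ) ^ ((1 - lam) * ((z : ℝ) + 1)) * ((z : ℝ) + 1) ^ (s - 1)) ∧
    Summable (fun k : {k : Fin s → ℕ // k ∈ dualNet b C ∧ k ≠ 0} =>
      (b : ℝ) ^ (-(lam * (dickWeightV b 1 k.val : ℝ)))) ∧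
    (∑' k : {k : Fin s → ℕ // k ∈ dualNet b C ∧ k ≠ 0},
        (b : ℝ) ^ (-(lam * (dickWeightV b 1 k.val : ℝ))))
      ≤ 2 ^ (s - 1) * (b : ℝ) ^ lam * (minWeight b 1 C : ℝ) ^ (s - 1)
          * (b : ℝ) ^ (-(lam * (minWeight b 1 C : ℝ)))
          * ∑' z : ℕ, (b : ℝ) ^ ((1 - lam) * ((z : ℝ) + 1)) * ((z : ℝ) + 1) ^ (s - 1) := by
  refine ⟨summable_rpow_mul_pow (mod_cast hb) (sub_neg.2 hlam) (s - 1), ?_⟩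
  obtain hempty | ⟨⟨k, hk, hk0⟩⟩ := isEmpty_or_nonempty {k : Fin s → ℕ // k ∈ dualNet b C ∧ k ≠ 0}
  · rw [tsum_empty]
    exact ⟨summable_empty, mul_nonneg (by positivity) (tsum_nonneg fun z => by positivity)⟩
  · exact summable_and_tsum_rpow_dickWeightV_le hb (isDigitSubClosed_dualNet hb C)
      (minWeight_one_pos hb hk hk0) (fun _ => minWeight_le) hlam

/-- Lemma 2.1(2): weighted sum over the dual net, NRT weight. -/
theorem stmt_1 (b : ℕ) (hb : b.Prime) (s n m : ℕ)
    (C : Fin s → Matrix (Fin n) (Fin m) (ZMod b)) (lam : ℝ) (hlam : 1 < lam) :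
    Summable (fun z : ℕ =>
      (b : ℝ) ^ ((1 - lam) * ((z : ℝ) + 1)) * ((z : ℝ) + 1) ^ (s - 1)) ∧
    Summable (fun k : {k : Fin s → ℕ // k ∈ dualNet b C ∧ k ≠ 0} =>
      (b : ℝ) ^ (-(lam * (dickWeightV b 1 k.val : ℝ)))) ∧
    (∑' k : {k : Fin s → ℕ // k ∈ dualNet b C ∧ k ≠ 0},
        (b : ℝ) ^ (-(lam * (dickWeightV b 1 k.val : ℝ))))
      ≤ 2 ^ (s - 1) * (b : ℝ) ^ lam * (minWeight b 1 C : ℝ) ^ (s - 1)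
          * (b : ℝ) ^ (-(lam * (minWeight b 1 C : ℝ)))
          * ∑' z : ℕ, (b : ℝ) ^ ((1 - lam) * ((z : ℝ) + 1)) * ((z : ℝ) + 1) ^ (s - 1) := by
  exact stmt_1_general b hb.one_lt s n m C lam hlam
end

section
/- Let b be a prime, let beta >= 2 be an integer, and let P be an order beta digital (t_beta, m, s)-net over F_b, i.e., a digital net over F_b with n x m generating matrices such that t_beta = beta*m - mu_beta(P^perp) + 1. Then for every integer 1 <= alpha < beta, P is an order alpha digital (t_alpha, m, s)-net over F_b with t_alpha = alpha*m - mu_alpha(P^perp) + 1 <= ceil(t_beta * alpha / beta). -/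
open MeasureTheory Finset Matrix

/-!
The `p` largest terms of an antitone list of naturals have a mean at least as large as its `q ≥ p`
largest terms, and `μ_α`, `μ_β` sum exactly such initial segments. Hence `α μ_β(k) ≤ β μ_α(k)` for
every `k`, and the same holds for the minima over the nonzero dual vectors. Consequently
`β (t_α - 1) = β α m - β μ_α(P^⊥) ≤ α (β m - μ_β(P^⊥)) = α (t_β - 1) < α t_β`, and since `t_α` is an
integer, `t_α - 1 < t_β α / β` gives `t_α ≤ ⌈t_β α / β⌉`.
-/

section SumTake

variable {M : Type*} [AddCommMonoid M] [Preorder M] [IsOrderedAddMonoid M]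

theorem length_nsmul_sum_le_length_nsmul_sum {l₁ l₂ : List M}
    (h : ∀ x ∈ l₁, ∀ y ∈ l₂, y ≤ x) : l₁.length • l₂.sum ≤ l₂.length • l₁.sum := by
  induction l₁ with
  | nil => simp
  | cons a l₁ ih =>
    obtain ⟨le_head, le_tail⟩ := List.forall_mem_cons.mp h
    rw [List.length_cons, List.sum_cons, succ_nsmul', nsmul_add]
    exact add_le_add (List.sum_le_card_nsmul _ _ le_head) (ih le_tail)

theorem nsmul_sum_take_le_nsmul_sum_take {l : List M} (hl : l.SortedGE)
    (nonneg : ∀ x ∈ l, 0 ≤ x) {p q : ℕ} (hpq : p ≤ q) :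
    p • (l.take q).sum ≤ q • (l.take p).sum := by
  rcases le_total l.length p with hp | hp
  · rw [List.take_of_length_le hp, List.take_of_length_le (hp.trans hpq)]
    exact nsmul_le_nsmul_left (List.sum_nonneg nonneg) hpq
  obtain ⟨d, rfl⟩ := Nat.exists_eq_add_of_le hpq
  set head := l.take p with head_def
  set next := (l.drop p).take d
  have next_le_head : ∀ x ∈ head, ∀ y ∈ next, y ≤ x := by
    have split : (head ++ l.drop p).Pairwise (· ≥ ·) := by
      simpa only [head_def, List.take_append_drop] using hl.pairwise
    exact fun x hx y hy ↦ (List.pairwise_append.mp split).2.2 x hx y (List.mem_of_mem_take hy)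
  have head_sum_nonneg : 0 ≤ head.sum :=
    List.sum_nonneg fun x hx ↦ nonneg x (List.mem_of_mem_take hx)
  calc p • (l.take (p + d)).sum
      = p • head.sum + head.length • next.sum := by
        rw [List.take_add, List.sum_append, nsmul_add, List.length_take_of_le hp]
    _ ≤ p • head.sum + next.length • head.sum := by
        gcongr p • head.sum + ?_
        exact length_nsmul_sum_le_length_nsmul_sum next_le_head
    _ ≤ p • head.sum + d • head.sum := by
        gcongr p • head.sum + ?_
        exact nsmul_le_nsmul_left head_sum_nonneg (List.length_take_le ..)
    _ = (p + d) • head.sum := (add_nsmul ..).symm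

end SumTake

theorem mul_sInf_image_le_mul_sInf_image {ι : Type*} {S : Set ι} {f g : ι → ℕ} {c d : ℕ}
    (h : ∀ i ∈ S, c * f i ≤ d * g i) : c * sInf (f '' S) ≤ d * sInf (g '' S) := by
  rcases S.eq_empty_or_nonempty with rfl | hS
  · simp
  · obtain ⟨i, hi, g_min⟩ := Nat.sInf_mem (hS.image g)
    calc c * sInf (f '' S) ≤ c * f i := by gcongr; exact Nat.sInf_le (Set.mem_image_of_mem f hi)
      _ ≤ d * g i := h i hi
      _ = d * sInf (g '' S) := by rw [g_min]

section DickWeight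

variable {α β : ℕ}

theorem sortedGE_nzPos (b k : ℕ) : (nzPos b k).SortedGE :=
  (Finset.sortedLT_sort _).sortedLE.reverse

theorem mul_dickWeight_le_mul_dickWeight (hαβ : α ≤ β) (b k : ℕ) :
    α * dickWeight b β k ≤ β * dickWeight b α k := by
  have sorted : ((nzPos b k).map (· + 1)).SortedGE :=
    (List.pairwise_map.mpr <| (sortedGE_nzPos b k).pairwise.imp
      fun h ↦ Nat.add_le_add_right h 1).sortedGE
  simpa only [dickWeight, List.map_take, smul_eq_mul] using
    nsmul_sum_take_le_nsmul_sum_take sorted (fun _ _ ↦ Nat.zero_le _) hαβ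

theorem mul_dickWeightV_le_mul_dickWeightV (hαβ : α ≤ β) (b : ℕ) {s : ℕ} (k : Fin s → ℕ) :
    α * dickWeightV b β k ≤ β * dickWeightV b α k := by
  simp only [dickWeightV, Finset.mul_sum]
  exact Finset.sum_le_sum fun j _ ↦ mul_dickWeight_le_mul_dickWeight hαβ b (k j)

theorem mul_minWeight_le_mul_minWeight (hαβ : α ≤ β) {b s n m : ℕ}
    (C : Fin s → Matrix (Fin n) (Fin m) (ZMod b)) :
    α * minWeight b β C ≤ β * minWeight b α C :=
  mul_sInf_image_le_mul_sInf_image fun k _ ↦ mul_dickWeightV_le_mul_dickWeightV hαβ b k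

end DickWeight

theorem stmt_3_general {b s n m α β : ℕ} (C : Fin s → Matrix (Fin n) (Fin m) (ZMod b)) {tβ : ℤ}
    (htβ : tβ = β * m - minWeight b β C + 1) (hα : 1 ≤ α) (hαβ : α ≤ β) :
    (α * m : ℤ) - minWeight b α C + 1 ≤ ⌈(tβ * α : ℚ) / β⌉ := by
  have weights : (α * minWeight b β C : ℤ) ≤ β * minWeight b α C :=
    mod_cast mul_minWeight_le_mul_minWeight hαβ C
  have scaled : (α * m - minWeight b α C : ℤ) * β < tβ * α := by
    calc (α * m - minWeight b α C : ℤ) * β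
        ≤ (tβ - 1) * α := by rw [htβ]; linarith
      _ < tβ * α := by gcongr; omega
  have hβ : (0 : ℚ) < β := mod_cast hα.trans hαβ
  rw [Int.add_one_le_iff, Int.lt_ceil, lt_div_iff₀ hβ]
  exact_mod_cast scaled

/-- Lemma 3.1 (propagation rule): an order `β` digital `(t_β,m,s)`-net is an order `α`
digital `(t_α,m,s)`-net with `t_α ≤ ⌈t_β α / β⌉`, for `1 ≤ α < β`. -/
theorem stmt_3 (b : ℕ) (hb : b.Prime) (s n m β : ℕ) (hβ : 2 ≤ β)
    (C : Fin s → Matrix (Fin n) (Fin m) (ZMod b)) (tβ : ℕ)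
    (htβ : (tβ : ℤ) = β * m - minWeight b β C + 1)
    (α : ℕ) (hα1 : 1 ≤ α) (hαβ : α < β) :
    (α * m : ℤ) - minWeight b α C + 1 ≤ ⌈((tβ * α : ℕ) : ℚ) / (β : ℚ)⌉ := by
  simpa only [Nat.cast_mul, Int.cast_natCast] using stmt_3_general C htβ hα1 hαβ.le
end
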